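/- arXiv:2211.01187 — 2 statements merged into one kernel-verified Lean document; each statement's English description precedes it below -/
import Mathlib

section
/- The map t ↦ L_t(0) is continuous on [0,T], where L_t(0) is the value of the operator L_t at the zero random variable. -/
open MeasureTheory Filter Topology

/-- The operator `L_t(η) := inf {x ≥ 0 : 𝐄[ℓ(·, t, x+η)] ≥ 0}`. -/
noncomputable def LopT {Ω : Type*} [MeasurableSpace Ω] (P : Measure Ω)
    (ℓ : Ω → ℝ → ℝ → ℝ) (t : ℝ) (η : Ω → ℝ) : ℝ :=
  sInf {x : ℝ | 0 ≤ x ∧ 0 ≤ ∫ ω, ℓ ω t (x + η ω) ∂P}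

/-!
`L_t(η)` is the first `x ≥ 0` at which `f t x := 𝐄[ℓ(·, t, x + η)]` becomes nonnegative. Dominated
convergence makes `f` continuous in `t`, and `f` is strictly increasing in `x`. The sign of `f` at
a fixed level `d` is therefore stable under small changes of `t`: where `f t d < 0` the first
passage stays above `d`, and where `f t d > 0` it stays below `d`. Strictness is what produces a
level with `f t d > 0` immediately after the first passage.
-/

section FirstPassage

variable {X α β : Type*} [TopologicalSpace X] [ConditionallyCompleteLinearOrder α]
  [DenselyOrdered α] [LinearOrder β] {f : X → α → β} {s : Set X} {a : α} {c : β}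

theorem lowerSemicontinuousOn_sInf_of_monotoneOn
    (hcont : ∀ x, a ≤ x → UpperSemicontinuousOn (fun t => f t x) s)
    (hmono : ∀ t ∈ s, MonotoneOn (f t) (Set.Ici a))
    (hne : ∀ t ∈ s, ∃ x, a ≤ x ∧ c ≤ f t x) :
    LowerSemicontinuousOn (fun t => sInf {x | a ≤ x ∧ c ≤ f t x}) s := by
  intro t ht b hb
  obtain hba | hab := lt_or_ge b a
  · filter_upwards [self_mem_nhdsWithin] with u hu
    exact hba.trans_le (le_csInf (hne u hu) fun x hx => hx.1)
  · obtain ⟨d, hbd, hd⟩ := exists_between hb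
    have had : a ≤ d := hab.trans hbd.le
    have hfd : f t d < c := by
      by_contra! hcd
      exact notMem_of_lt_csInf hd ⟨a, fun x hx => hx.1⟩ ⟨had, hcd⟩
    filter_upwards [hcont d had t ht c hfd, self_mem_nhdsWithin] with u hfud hu
    refine hbd.trans_le (le_csInf (hne u hu) fun x ⟨hax, hcx⟩ => ?_)
    by_contra! hxd
    exact (hcx.trans (hmono u hu hax had hxd.le)).not_gt hfud

theorem upperSemicontinuousOn_sInf_of_strictMonoOn
    (hcont : ∀ x, a ≤ x → LowerSemicontinuousOn (fun t => f t x) s)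
    (hmono : ∀ t ∈ s, StrictMonoOn (f t) (Set.Ici a))
    (hne : ∀ t ∈ s, ∃ x, a ≤ x ∧ c ≤ f t x) :
    UpperSemicontinuousOn (fun t => sInf {x | a ≤ x ∧ c ≤ f t x}) s := by
  intro t ht b hb
  obtain ⟨x, ⟨hax, hcx⟩, hxb⟩ := exists_lt_of_csInf_lt (hne t ht) hb
  obtain ⟨d, hxd, hdb⟩ := exists_between hxb
  have had : a ≤ d := hax.trans hxd.le
  have hfd : c < f t d := hcx.trans_lt (hmono t ht hax had hxd)
  filter_upwards [hcont d had t ht c hfd] with u hfud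
  have hd : d ∈ {x | a ≤ x ∧ c ≤ f u x} := ⟨had, hfud.le⟩
  exact (csInf_le ⟨a, fun y hy => hy.1⟩ hd).trans_lt hdb

theorem continuousOn_sInf_of_strictMonoOn [TopologicalSpace α] [OrderTopology α]
    [TopologicalSpace β] [OrderClosedTopology β]
    (hcont : ∀ x, a ≤ x → ContinuousOn (fun t => f t x) s)
    (hmono : ∀ t ∈ s, StrictMonoOn (f t) (Set.Ici a))
    (hne : ∀ t ∈ s, ∃ x, a ≤ x ∧ c ≤ f t x) :
    ContinuousOn (fun t => sInf {x | a ≤ x ∧ c ≤ f t x}) s :=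
  continuousOn_iff_lower_upperSemicontinuousOn.2
    ⟨lowerSemicontinuousOn_sInf_of_monotoneOn
        (fun x hx t ht _ hlt => (hcont x hx t ht).eventually_lt_const hlt)
        (fun t ht => (hmono t ht).monotoneOn) hne,
      upperSemicontinuousOn_sInf_of_strictMonoOn
        (fun x hx t ht _ hlt => (hcont x hx t ht).eventually_const_lt hlt) hmono hne⟩

end FirstPassage

section Expectation

variable {Ω : Type*} [MeasurableSpace Ω] {P : Measure Ω}

theorem integral_lt_integral_of_ae_lt [NeZero P] {f g : Ω → ℝ} (hf : Integrable f P)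
    (hg : Integrable g P) (hfg : ∀ᵐ ω ∂P, f ω < g ω) : ∫ ω, f ω ∂P < ∫ ω, g ω ∂P := by
  have hle : f ≤ᵐ[P] g := hfg.mono fun _ => le_of_lt
  refine (integral_mono_ae hf hg hle).lt_of_ne fun heq => ?_
  obtain ⟨ω, hlt, hω⟩ := (hfg.and ((integral_eq_iff_of_ae_le hf hg hle).1 heq)).exists
  exact hlt.ne hω

theorem strictMono_integral_add [NeZero P] {g : Ω → ℝ → ℝ} {η : Ω → ℝ}
    (hmono : ∀ ω, StrictMono (g ω)) (hint : ∀ x, Integrable (fun ω => g ω (x + η ω)) P) :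
    StrictMono fun x => ∫ ω, g ω (x + η ω) ∂P := fun x y hxy =>
  integral_lt_integral_of_ae_lt (hint x) (hint y)
    (ae_of_all P fun ω => hmono ω (add_lt_add_left hxy (η ω)))

-- The truncation `min (g ω (x + η ω)) (g ω y)` is dominated for `x ≥ 0` and equals `g ω y` once
-- `x + η ω ≥ y`, so its expectation tends to that of `g ω y`.
theorem exists_nonneg_integral_add_pos {g : Ω → ℝ → ℝ} {η : Ω → ℝ} {y : ℝ}
    (hmono : ∀ ω, Monotone (g ω)) (hint : ∀ x, Integrable (fun ω => g ω (x + η ω)) P)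
    (hy : 0 < ∫ ω, g ω y ∂P) : ∃ x, 0 ≤ x ∧ 0 < ∫ ω, g ω (x + η ω) ∂P := by
  have hinty : Integrable (fun ω => g ω y) P := .of_integral_ne_zero hy.ne'
  have hmin : ∀ x, Integrable (fun ω => min (g ω (x + η ω)) (g ω y)) P :=
    fun x => (hint x).inf hinty
  have hlim : Tendsto (fun x => ∫ ω, min (g ω (x + η ω)) (g ω y) ∂P) atTop
      (𝓝 (∫ ω, g ω y ∂P)) := by
    refine tendsto_integral_filter_of_dominated_convergence
      (fun ω => max |min (g ω (0 + η ω)) (g ω y)| |g ω y|)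
      (.of_forall fun x => (hmin x).aestronglyMeasurable) ?_
      ((hmin 0).abs.sup hinty.abs) (ae_of_all P fun ω => ?_)
    · filter_upwards [eventually_ge_atTop 0] with x hx
      refine ae_of_all P fun ω => ?_
      have hle : g ω (0 + η ω) ≤ g ω (x + η ω) := hmono ω (add_le_add_left hx (η ω))
      exact abs_le_max_abs_abs (min_le_min_right _ hle) (min_le_right _ _)
    · refine tendsto_const_nhds.congr' ?_
      filter_upwards [eventually_ge_atTop (y - η ω)] with x hx
      exact (min_eq_right (hmono ω (by linarith))).symm
  obtain ⟨x, hpos, hx⟩ := ((hlim.eventually_const_lt hy).and (eventually_ge_atTop 0)).exists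
  exact ⟨x, hx, hpos.trans_le (integral_mono (hmin x) (hint x) fun _ => min_le_left _ _)⟩

variable [IsFiniteMeasure P] {η : Ω → ℝ} {L : ℝ}

theorem integrable_mul_one_add_abs (hη : Integrable η P) :
    Integrable (fun ω => L * (1 + |η ω|)) P :=
  ((integrable_const 1).add hη.abs).const_mul L

theorem integrable_comp_of_linear_growth {g : Ω → ℝ → ℝ}
    (hmeas : Measurable (Function.uncurry g))
    (hgrowth : ∀ ω y, |g ω y| ≤ L * (1 + |y|)) (hη : Integrable η P) :
    Integrable (fun ω => g ω (η ω)) P :=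
  (integrable_mul_one_add_abs hη).mono'
    (hmeas.comp_aemeasurable (aemeasurable_id.prodMk hη.aemeasurable)).aestronglyMeasurable
    (ae_of_all P fun ω => hgrowth ω (η ω))

theorem continuousOn_integral_comp_of_linear_growth {X : Type*} [TopologicalSpace X]
    [FirstCountableTopology X] {s : Set X} {ℓ : Ω → X → ℝ → ℝ}
    (hmeas : ∀ t ∈ s, Measurable fun p : Ω × ℝ => ℓ p.1 t p.2)
    (hcont : ∀ ω y, ContinuousOn (fun t => ℓ ω t y) s)
    (hgrowth : ∀ ω, ∀ t ∈ s, ∀ y, |ℓ ω t y| ≤ L * (1 + |y|)) (hη : Integrable η P) :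
    ContinuousOn (fun t => ∫ ω, ℓ ω t (η ω) ∂P) s :=
  continuousOn_of_dominated
    (fun t ht => (integrable_comp_of_linear_growth (hmeas t ht)
      (fun ω => hgrowth ω t ht) hη).aestronglyMeasurable)
    (fun t ht => ae_of_all P fun ω => hgrowth ω t ht (η ω))
    (integrable_mul_one_add_abs hη) (ae_of_all P fun ω => hcont ω (η ω))

end Expectation

theorem exists_pos_of_tendsto_coe_ereal {ι : Type*} {F : Filter ι} [F.NeBot] {f : ι → ℝ}
    {l : EReal} (hl : 0 < l) (hf : Tendsto (fun i => (f i : EReal)) F (𝓝 l)) :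
    ∃ i, 0 < f i :=
  (hf.eventually_const_lt hl).exists.imp fun _ => EReal.coe_pos.1

theorem stmt4_general {Ω : Type*} [MeasurableSpace Ω] {P : Measure Ω} [IsFiniteMeasure P]
    {s : Set ℝ} {ℓ : Ω → ℝ → ℝ → ℝ} {η : Ω → ℝ} {L₀ : ℝ} (hη : Integrable η P)
    (hmeas : ∀ t ∈ s, Measurable fun p : Ω × ℝ => ℓ p.1 t p.2)
    (hcont : ∀ ω y, ContinuousOn (fun t => ℓ ω t y) s)
    (hmono : ∀ ω, ∀ t ∈ s, StrictMono (ℓ ω t))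
    (hgrowth : ∀ ω, ∀ t ∈ s, ∀ y, |ℓ ω t y| ≤ L₀ * (1 + |y|))
    (hpos : ∀ t ∈ s, ∃ y, 0 < ∫ ω, ℓ ω t y ∂P) :
    ContinuousOn (fun t => LopT P ℓ t η) s := by
  have hadd : ∀ x, Integrable (fun ω => x + η ω) P := fun x => (integrable_const x).add hη
  have hint : ∀ t ∈ s, ∀ x, Integrable (fun ω => ℓ ω t (x + η ω)) P := fun t ht x =>
    integrable_comp_of_linear_growth (hmeas t ht) (fun ω => hgrowth ω t ht) (hadd x)
  refine continuousOn_sInf_of_strictMonoOn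
    (fun x _ => continuousOn_integral_comp_of_linear_growth hmeas hcont hgrowth (hadd x))
    (fun t ht => ?_) (fun t ht => ?_)
  · have : NeZero P := ⟨by rintro rfl; simpa using hpos t ht⟩
    exact (strictMono_integral_add (fun ω => hmono ω t ht) (hint t ht)).strictMonoOn _
  · obtain ⟨y, hy⟩ := hpos t ht
    obtain ⟨x, hx, hfx⟩ :=
      exists_nonneg_integral_add_pos (fun ω => (hmono ω t ht).monotone) (hint t ht) hy
    exact ⟨x, hx, hfx.le⟩

/-- The map `t ↦ L_t(0)` is continuous on `[0, T]`. -/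
theorem stmt4 {Ω : Type*} [MeasurableSpace Ω] (P : Measure Ω) [IsProbabilityMeasure P]
    (T : ℝ) (hT : 0 < T)
    (ℓ : Ω → ℝ → ℝ → ℝ)
    (hmeas : Measurable (fun p : Ω × ℝ × ℝ => ℓ p.1 p.2.1 p.2.2))
    (hcont : ∀ ω, ContinuousOn (fun p : ℝ × ℝ => ℓ ω p.1 p.2) (Set.Icc 0 T ×ˢ Set.univ))
    (hmono : ∀ ω, ∀ t ∈ Set.Icc (0 : ℝ) T, StrictMono (fun y => ℓ ω t y))
    (L₀ : ℝ) (hL₀ : 0 < L₀)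
    (hgrowth : ∀ ω, ∀ t ∈ Set.Icc (0 : ℝ) T, ∀ y, |ℓ ω t y| ≤ L₀ * (1 + |y|))
    (hlim : ∀ t ∈ Set.Icc (0 : ℝ) T, ∃ l : EReal, 0 < l ∧
      Tendsto (fun x : ℝ => ((∫ ω, ℓ ω t x ∂P : ℝ) : EReal)) atTop (𝓝 l)) :
    ContinuousOn (fun t => LopT P ℓ t (fun _ => 0)) (Set.Icc 0 T) :=
  stmt4_general (integrable_const 0)
    (fun t _ => hmeas.comp (by fun_prop : Measurable fun p : Ω × ℝ => (p.1, t, p.2)))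
    (fun ω y => (hcont ω).uncurry_right (f := ℓ ω) y (Set.mem_univ y)) hmono hgrowth
    fun t ht => let ⟨_, hl, hf⟩ := hlim t ht; exists_pos_of_tendsto_coe_ereal hl hf
end

section
/- If (y¹_t)_{t∈[0,T]} and (y²_t)_{t∈[0,T]} are jointly measurable real-valued stochastic processes with continuous sample paths satisfying 𝐄[sup_{t∈[0,T]} |yⁱ_t|] < ∞ for i = 1,2, then for every t ∈ [0,T]: |sup_{s∈[t,T]} L_s(y¹_s) − sup_{s∈[t,T]} L_s(y²_s)| ≤ κ sup_{s∈[t,T]} 𝐄[|y¹_s − y²_s|]. -/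
open MeasureTheory Filter Topology

/- Replacing the position `ζ` by `η` lowers the expected value of `ℓ` by at most `κ C 𝐄|η - ζ|`,
because `ℓ` is `κ C`-Lipschitz, while adding `d` to the position raises it by at least `C d`,
because `ℓ` has slope at least `C`. So if the level `x` is acceptable for `ζ`, the level
`x + κ 𝐄|η - ζ|` is acceptable for `η`, and `L_t` is `κ`-Lipschitz in `L¹`. Comparing with the
position `0` also bounds `L_s(y_s)` uniformly in `s`, so the suprema over `s` are finite and inherit
the estimate. -/

lemma abs_ciSup_sub_ciSup_le {ι : Type*} [Nonempty ι] {f g : ι → ℝ} {c : ℝ}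
    (hf : BddAbove (Set.range f)) (hg : BddAbove (Set.range g)) (hfg : ∀ i, |f i - g i| ≤ c) :
    |(⨆ i, f i) - ⨆ i, g i| ≤ c := by
  rw [abs_sub_le_iff, sub_le_iff_le_add', sub_le_iff_le_add']
  constructor
  · exact ciSup_le fun i => by linarith [le_ciSup hg i, (abs_sub_le_iff.1 (hfg i)).1]
  · exact ciSup_le fun i => by linarith [le_ciSup hf i, (abs_sub_le_iff.1 (hfg i)).2]

lemma monotone_sub_const_mul {f : ℝ → ℝ} {C : ℝ} (hf : Monotone f)
    (hC : ∀ y z, C * |y - z| ≤ |f y - f z|) : Monotone fun y => f y - C * y := by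
  intro z y hzy
  have hslope := hC y z
  rw [abs_of_nonneg (sub_nonneg.2 hzy), abs_of_nonneg (sub_nonneg.2 (hf hzy))] at hslope
  linarith

/-- A family of real random variables indexed by `ι` is bounded in `L¹(P)` along `S`. -/
structure IsL1BoundedOn {Ω ι : Type*} [MeasurableSpace Ω] (P : Measure Ω) (y : ι → Ω → ℝ)
    (S : Set ι) : Prop where
  integrable : ∀ s ∈ S, Integrable (y s) P
  bddAbove : BddAbove ((fun s => ∫ ω, |y s ω| ∂P) '' S)

/-- A random loss function: measurable in scenario and position and, in each scenario, increasing
with slope at least `C > 0` and `κ C`-Lipschitz. The lower slope bound is encoded as monotonicity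
of `y ↦ g ω y - C y`. -/
structure IsBilipschitzLoss {Ω : Type*} [MeasurableSpace Ω] (κ C : ℝ) (g : Ω → ℝ → ℝ) :
    Prop where
  pos : 0 < C
  measurable : Measurable fun p : Ω × ℝ => g p.1 p.2
  monotone_sub : ∀ ω, Monotone fun y => g ω y - C * y
  abs_sub_le : ∀ ω y z, |g ω y - g ω z| ≤ κ * C * |y - z|

namespace IsL1BoundedOn

variable {Ω ι : Type*} [MeasurableSpace Ω] {P : Measure Ω} {y y₁ y₂ : ι → Ω → ℝ} {S R : Set ι}

lemma mono (h : IsL1BoundedOn P y S) (hRS : R ⊆ S) : IsL1BoundedOn P y R :=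
  ⟨fun s hs => h.integrable s (hRS hs), h.bddAbove.mono (Set.image_mono hRS)⟩

lemma of_abs_le {b : Ω → ℝ} (hy : ∀ s ∈ S, AEStronglyMeasurable (y s) P)
    (hb : Integrable b P) (hyb : ∀ s ∈ S, ∀ ω, |y s ω| ≤ b ω) : IsL1BoundedOn P y S := by
  have hint : ∀ s ∈ S, Integrable (y s) P := fun s hs =>
    hb.mono' (hy s hs) (ae_of_all _ (hyb s hs))
  exact ⟨hint, ∫ ω, b ω ∂P,
    Set.forall_mem_image.2 fun s hs => integral_mono (hint s hs).abs hb (hyb s hs)⟩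

lemma of_integrable_iSup_abs (hy : ∀ s ∈ S, AEStronglyMeasurable (y s) P)
    (hbdd : ∀ ω, BddAbove ((fun s => |y s ω|) '' S))
    (hsup : Integrable (fun ω => ⨆ s : S, |y s ω|) P) : IsL1BoundedOn P y S :=
  of_abs_le hy hsup fun _ hs ω => le_ciSup_set (hbdd ω) hs

lemma of_continuousOn [TopologicalSpace ι] (hS : IsCompact S)
    (hy : ∀ s ∈ S, AEStronglyMeasurable (y s) P) (hpath : ∀ ω, ContinuousOn (fun s => y s ω) S)
    (hsup : Integrable (fun ω => ⨆ s : S, |y s ω|) P) : IsL1BoundedOn P y S :=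
  of_integrable_iSup_abs hy (fun ω => hS.bddAbove_image (hpath ω).abs) hsup

lemma sub (h₁ : IsL1BoundedOn P y₁ S) (h₂ : IsL1BoundedOn P y₂ S) :
    IsL1BoundedOn P (fun s ω => y₁ s ω - y₂ s ω) S := by
  obtain ⟨M₁, hM₁⟩ := h₁.bddAbove
  obtain ⟨M₂, hM₂⟩ := h₂.bddAbove
  refine ⟨fun s hs => (h₁.integrable s hs).sub (h₂.integrable s hs), M₁ + M₂,
    Set.forall_mem_image.2 fun s hs => ?_⟩
  have hi₁ := h₁.integrable s hs
  have hi₂ := h₂.integrable s hs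
  calc ∫ ω, |y₁ s ω - y₂ s ω| ∂P
      ≤ ∫ ω, (|y₁ s ω| + |y₂ s ω|) ∂P :=
        integral_mono (hi₁.sub hi₂).abs (hi₁.abs.add hi₂.abs) fun ω => abs_sub _ _
    _ = (∫ ω, |y₁ s ω| ∂P) + ∫ ω, |y₂ s ω| ∂P := integral_add hi₁.abs hi₂.abs
    _ ≤ M₁ + M₂ := add_le_add (hM₁ (Set.mem_image_of_mem _ hs)) (hM₂ (Set.mem_image_of_mem _ hs))

end IsL1BoundedOn

/-- The levels `x ≥ 0` that make the position `x + η` acceptable, i.e. of nonnegative expected loss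
`g`; `LopT P ℓ t η` is the infimum of these levels for the loss `ℓ(·, t, ·)`. -/
def acceptableLevels {Ω : Type*} [MeasurableSpace Ω] (P : Measure Ω) (g : Ω → ℝ → ℝ)
    (η : Ω → ℝ) : Set ℝ :=
  {x | 0 ≤ x ∧ 0 ≤ ∫ ω, g ω (x + η ω) ∂P}

lemma LopT_le {Ω : Type*} [MeasurableSpace Ω] {P : Measure Ω} {ℓ : Ω → ℝ → ℝ → ℝ} {t x : ℝ}
    {η : Ω → ℝ} (hx : x ∈ acceptableLevels P (fun ω => ℓ ω t) η) : LopT P ℓ t η ≤ x :=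
  csInf_le ⟨0, fun _ hz => hz.1⟩ hx

namespace IsBilipschitzLoss

variable {Ω : Type*} [MeasurableSpace Ω] {P : Measure Ω} {κ C : ℝ}

section Loss

variable {g : Ω → ℝ → ℝ} {η ζ : Ω → ℝ}

lemma of_monotone (hC : 0 < C) (hmeas : Measurable fun p : Ω × ℝ => g p.1 p.2)
    (hmono : ∀ ω, Monotone (g ω))
    (hbilip : ∀ ω y z, C * |y - z| ≤ |g ω y - g ω z| ∧ |g ω y - g ω z| ≤ κ * C * |y - z|) :
    IsBilipschitzLoss κ C g where
  pos := hC
  measurable := hmeas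
  monotone_sub ω := monotone_sub_const_mul (hmono ω) fun y z => (hbilip ω y z).1
  abs_sub_le ω y z := (hbilip ω y z).2

lemma nonneg (hg : IsBilipschitzLoss κ C g) (hΩ : Nonempty Ω) : 0 ≤ κ := by
  obtain ⟨ω⟩ := hΩ
  have hlip : 0 ≤ κ * C := by
    simpa only [sub_zero, abs_one, mul_one] using (abs_nonneg _).trans (hg.abs_sub_le ω 1 0)
  exact nonneg_of_mul_nonneg_left hlip hg.pos

lemma add_mul_sub_le (hg : IsBilipschitzLoss κ C g) (ω : Ω) (y z : ℝ) {d : ℝ} (hd : 0 ≤ d) :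
    g ω z + C * (d - κ * |y - z|) ≤ g ω (y + d) := by
  have hgain := hg.monotone_sub ω (le_add_of_nonneg_right hd : y ≤ y + d)
  have hcost := (abs_le.1 (hg.abs_sub_le ω y z)).1
  linarith

lemma integrable_comp (hg : IsBilipschitzLoss κ C g) (hg₀ : Integrable (fun ω => g ω 0) P)
    (hη : Integrable η P) : Integrable (fun ω => g ω (η ω)) P := by
  have hmeas : AEMeasurable (fun ω => g ω (η ω)) P :=
    hg.measurable.comp_aemeasurable (aemeasurable_id.prodMk hη.aemeasurable)
  refine (hg₀.abs.add (hη.abs.const_mul (κ * C))).mono' hmeas.aestronglyMeasurable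
    (ae_of_all _ fun ω => ?_)
  have hlip := hg.abs_sub_le ω (η ω) 0
  rw [sub_zero] at hlip
  calc |g ω (η ω)| ≤ |g ω 0| + |g ω (η ω) - g ω 0| := by
        simpa only [add_sub_cancel] using abs_add_le (g ω 0) (g ω (η ω) - g ω 0)
    _ ≤ |g ω 0| + κ * C * |η ω| := by gcongr

lemma integral_add_mul_sub_le [IsProbabilityMeasure P] (hg : IsBilipschitzLoss κ C g)
    (hg₀ : Integrable (fun ω => g ω 0) P) (hη : Integrable η P) (hζ : Integrable ζ P) {d : ℝ}
    (hd : 0 ≤ d) :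
    (∫ ω, g ω (ζ ω) ∂P) + C * (d - κ * ∫ ω, |η ω - ζ ω| ∂P) ≤ ∫ ω, g ω (η ω + d) ∂P := by
  have hgζ := hg.integrable_comp hg₀ hζ
  have hdiff : Integrable (fun ω => κ * |η ω - ζ ω|) P := (hη.sub hζ).abs.const_mul κ
  have hgain : Integrable (fun ω => C * (d - κ * |η ω - ζ ω|)) P :=
    ((integrable_const d).sub hdiff).const_mul C
  calc (∫ ω, g ω (ζ ω) ∂P) + C * (d - κ * ∫ ω, |η ω - ζ ω| ∂P)
      = ∫ ω, (g ω (ζ ω) + C * (d - κ * |η ω - ζ ω|)) ∂P := by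
        rw [integral_add hgζ hgain, integral_const_mul, integral_sub (integrable_const d) hdiff,
          integral_const_mul, integral_const, probReal_univ, one_smul]
    _ ≤ ∫ ω, g ω (η ω + d) ∂P :=
        integral_mono (hgζ.add hgain)
          (hg.integrable_comp hg₀ (hη.add (integrable_const d)))
          fun ω => hg.add_mul_sub_le ω (η ω) (ζ ω) hd

lemma add_mem_acceptableLevels [IsProbabilityMeasure P] (hg : IsBilipschitzLoss κ C g)
    (hg₀ : Integrable (fun ω => g ω 0) P) (hη : Integrable η P) (hζ : Integrable ζ P) {x : ℝ}
    (hx : x ∈ acceptableLevels P g ζ) :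
    x + κ * ∫ ω, |η ω - ζ ω| ∂P ∈ acceptableLevels P g η := by
  have hκ : 0 ≤ κ := hg.nonneg P.nonempty_of_neZero
  set d := κ * ∫ ω, |η ω - ζ ω| ∂P with hd
  have hd₀ : 0 ≤ d := by positivity
  refine ⟨add_nonneg hx.1 hd₀, hx.2.trans ?_⟩
  have hshift := hg.integral_add_mul_sub_le hg₀ ((integrable_const x).add hη)
    ((integrable_const x).add hζ) hd₀
  simpa only [Pi.add_apply, add_sub_add_left_eq_sub, ← hd, sub_self, mul_zero, add_zero,
    add_right_comm] using hshift

lemma bound_mem_acceptableLevels [IsProbabilityMeasure P] (hg : IsBilipschitzLoss κ C g)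
    (hg₀ : Integrable (fun ω => g ω 0) P) (hη : Integrable η P) :
    (∫ ω, |g ω 0| ∂P) / C + κ * ∫ ω, |η ω| ∂P ∈ acceptableLevels P g η := by
  have hzero : (∫ ω, |g ω 0| ∂P) / C ∈ acceptableLevels P g 0 := by
    have hC := hg.pos
    have hd : 0 ≤ (∫ ω, |g ω 0| ∂P) / C := by positivity
    refine ⟨hd, ?_⟩
    have hgain := hg.integral_add_mul_sub_le hg₀ (integrable_zero Ω ℝ P)
      (integrable_zero Ω ℝ P) hd
    simp only [Pi.zero_apply, sub_self, abs_zero, integral_zero, mul_zero, sub_zero,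
      mul_div_cancel₀ _ hC.ne', zero_add, add_zero] at hgain ⊢
    have habs : |∫ ω, g ω 0 ∂P| ≤ ∫ ω, |g ω 0| ∂P := abs_integral_le_integral_abs
    linarith [neg_abs_le (∫ ω, g ω 0 ∂P)]
  simpa only [Pi.zero_apply, sub_zero] using
    hg.add_mem_acceptableLevels hg₀ hη (integrable_zero Ω ℝ P) hzero

end Loss

section LopT

variable [IsProbabilityMeasure P] {ℓ : Ω → ℝ → ℝ → ℝ} {t : ℝ} {η ζ : Ω → ℝ}

lemma LopT_le_LopT_add (hℓ : IsBilipschitzLoss κ C fun ω => ℓ ω t)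
    (hℓ₀ : Integrable (fun ω => ℓ ω t 0) P) (hη : Integrable η P) (hζ : Integrable ζ P) :
    LopT P ℓ t η ≤ LopT P ℓ t ζ + κ * ∫ ω, |η ω - ζ ω| ∂P := by
  rw [← sub_le_iff_le_add]
  refine le_csInf ⟨_, hℓ.bound_mem_acceptableLevels hℓ₀ hζ⟩ fun x hx => ?_
  rw [sub_le_iff_le_add]
  exact LopT_le (hℓ.add_mem_acceptableLevels hℓ₀ hη hζ hx)

lemma abs_LopT_sub_LopT_le (hℓ : IsBilipschitzLoss κ C fun ω => ℓ ω t)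
    (hℓ₀ : Integrable (fun ω => ℓ ω t 0) P) (hη : Integrable η P) (hζ : Integrable ζ P) :
    |LopT P ℓ t η - LopT P ℓ t ζ| ≤ κ * ∫ ω, |η ω - ζ ω| ∂P := by
  rw [abs_sub_le_iff, sub_le_iff_le_add', sub_le_iff_le_add']
  refine ⟨hℓ.LopT_le_LopT_add hℓ₀ hη hζ, ?_⟩
  simpa only [abs_sub_comm] using hℓ.LopT_le_LopT_add hℓ₀ hζ hη

lemma bddAbove_range_LopT {S : Set ℝ} {y : ℝ → Ω → ℝ}
    (hℓ : ∀ s ∈ S, IsBilipschitzLoss κ C fun ω => ℓ ω s)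
    (hℓ₀ : IsL1BoundedOn P (fun s ω => ℓ ω s 0) S) (hy : IsL1BoundedOn P y S) :
    BddAbove (Set.range fun s : S => LopT P ℓ s (y s)) := by
  obtain ⟨M₀, hM₀⟩ := hℓ₀.bddAbove
  obtain ⟨M, hM⟩ := hy.bddAbove
  refine ⟨M₀ / C + κ * M, Set.forall_mem_range.2 fun ⟨s, hs⟩ => ?_⟩
  have hC : 0 < C := (hℓ s hs).pos
  have hκ : 0 ≤ κ := (hℓ s hs).nonneg P.nonempty_of_neZero
  have hloss : ∫ ω, |ℓ ω s 0| ∂P ≤ M₀ := hM₀ (Set.mem_image_of_mem _ hs)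
  have hposition : ∫ ω, |y s ω| ∂P ≤ M := hM (Set.mem_image_of_mem _ hs)
  calc LopT P ℓ s (y s) ≤ (∫ ω, |ℓ ω s 0| ∂P) / C + κ * ∫ ω, |y s ω| ∂P :=
        LopT_le ((hℓ s hs).bound_mem_acceptableLevels (hℓ₀.integrable s hs) (hy.integrable s hs))
    _ ≤ M₀ / C + κ * M := by gcongr

end LopT

end IsBilipschitzLoss

theorem stmt6_general {Ω : Type*} [MeasurableSpace Ω] {P : Measure Ω} [IsProbabilityMeasure P]
    {S : Set ℝ} (hS : S.Nonempty) {ℓ : Ω → ℝ → ℝ → ℝ} {κ C : ℝ}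
    (hℓ : ∀ s ∈ S, IsBilipschitzLoss κ C fun ω => ℓ ω s)
    (hℓ₀ : IsL1BoundedOn P (fun s ω => ℓ ω s 0) S) {y₁ y₂ : ℝ → Ω → ℝ}
    (hy₁ : IsL1BoundedOn P y₁ S) (hy₂ : IsL1BoundedOn P y₂ S) :
    |(⨆ s : S, LopT P ℓ s (y₁ s)) - ⨆ s : S, LopT P ℓ s (y₂ s)| ≤
      κ * ⨆ s : S, ∫ ω, |y₁ s ω - y₂ s ω| ∂P := by
  have : Nonempty S := hS.to_subtype
  have hκ : 0 ≤ κ := (hℓ _ hS.some_mem).nonneg P.nonempty_of_neZero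
  refine abs_ciSup_sub_ciSup_le (IsBilipschitzLoss.bddAbove_range_LopT hℓ hℓ₀ hy₁)
    (IsBilipschitzLoss.bddAbove_range_LopT hℓ hℓ₀ hy₂) fun ⟨s, hs⟩ => ?_
  calc |LopT P ℓ s (y₁ s) - LopT P ℓ s (y₂ s)| ≤ κ * ∫ ω, |y₁ s ω - y₂ s ω| ∂P :=
        (hℓ s hs).abs_LopT_sub_LopT_le (hℓ₀.integrable s hs) (hy₁.integrable s hs)
          (hy₂.integrable s hs)
    _ ≤ κ * ⨆ r : S, ∫ ω, |y₁ r ω - y₂ r ω| ∂P :=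
        mul_le_mul_of_nonneg_left (le_ciSup_set (hy₁.sub hy₂).bddAbove hs) hκ

/-- For jointly measurable processes `y¹, y²` with continuous sample paths and
integrable running suprema, for every `t ∈ [0,T]`:
`|sup_{s∈[t,T]} L_s(y¹_s) − sup_{s∈[t,T]} L_s(y²_s)| ≤ κ sup_{s∈[t,T]} 𝐄[|y¹_s − y²_s|]`. -/
theorem stmt6 {Ω : Type*} [MeasurableSpace Ω] (P : Measure Ω) [IsProbabilityMeasure P]
    (T : ℝ) (hT : 0 < T)
    (ℓ : Ω → ℝ → ℝ → ℝ)
    (hmeas : Measurable (fun p : Ω × ℝ × ℝ => ℓ p.1 p.2.1 p.2.2))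
    (hcont : ∀ ω, ContinuousOn (fun p : ℝ × ℝ => ℓ ω p.1 p.2) (Set.Icc 0 T ×ˢ Set.univ))
    (hmono : ∀ ω, ∀ t ∈ Set.Icc (0 : ℝ) T, StrictMono (fun y => ℓ ω t y))
    (L₀ : ℝ) (hL₀ : 0 < L₀)
    (hgrowth : ∀ ω, ∀ t ∈ Set.Icc (0 : ℝ) T, ∀ y, |ℓ ω t y| ≤ L₀ * (1 + |y|))
    (hlim : ∀ t ∈ Set.Icc (0 : ℝ) T, ∃ l : EReal, 0 < l ∧
      Tendsto (fun x : ℝ => ((∫ ω, ℓ ω t x ∂P : ℝ) : EReal)) atTop (𝓝 l))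
    (κ C : ℝ) (hκ : 1 < κ) (hC : 0 < C)
    (hbilip : ∀ ω, ∀ t ∈ Set.Icc (0 : ℝ) T, ∀ y₁ y₂,
      C * |y₁ - y₂| ≤ |ℓ ω t y₁ - ℓ ω t y₂| ∧ |ℓ ω t y₁ - ℓ ω t y₂| ≤ κ * C * |y₁ - y₂|)
    (y₁ y₂ : ℝ → Ω → ℝ)
    (hymeas₁ : Measurable (fun q : ℝ × Ω => y₁ q.1 q.2))
    (hymeas₂ : Measurable (fun q : ℝ × Ω => y₂ q.1 q.2))
    (hypath₁ : ∀ ω, ContinuousOn (fun t => y₁ t ω) (Set.Icc 0 T))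
    (hypath₂ : ∀ ω, ContinuousOn (fun t => y₂ t ω) (Set.Icc 0 T))
    (hysup₁ : Integrable (fun ω => ⨆ t : Set.Icc (0 : ℝ) T, |y₁ t ω|) P)
    (hysup₂ : Integrable (fun ω => ⨆ t : Set.Icc (0 : ℝ) T, |y₂ t ω|) P) :
    ∀ t ∈ Set.Icc (0 : ℝ) T,
      |(⨆ s : Set.Icc t T, LopT P ℓ s (y₁ s)) - ⨆ s : Set.Icc t T, LopT P ℓ s (y₂ s)| ≤
        κ * ⨆ s : Set.Icc t T, ∫ ω, |y₁ (s : ℝ) ω - y₂ (s : ℝ) ω| ∂P := by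
  intro t ht
  have hsub : Set.Icc t T ⊆ Set.Icc 0 T := Set.Icc_subset_Icc_left ht.1
  have hℓ : ∀ s ∈ Set.Icc (0 : ℝ) T, IsBilipschitzLoss κ C fun ω => ℓ ω s := fun s hs =>
    .of_monotone hC (hmeas.comp (by fun_prop : Measurable fun p : Ω × ℝ => (p.1, s, p.2)))
      (fun ω => (hmono ω s hs).monotone) fun ω => hbilip ω s hs
  have hℓ₀ : IsL1BoundedOn P (fun s ω => ℓ ω s 0) (Set.Icc 0 T) :=
    .of_abs_le
      (fun s hs => ((hℓ s hs).measurable.comp measurable_prodMk_right).aestronglyMeasurable)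
      (integrable_const (L₀ * (1 + |0|))) fun s hs ω => hgrowth ω s hs 0
  have hy₁ : IsL1BoundedOn P y₁ (Set.Icc 0 T) := .of_continuousOn isCompact_Icc
    (fun s _ => (hymeas₁.comp measurable_prodMk_left).aestronglyMeasurable) hypath₁ hysup₁
  have hy₂ : IsL1BoundedOn P y₂ (Set.Icc 0 T) := .of_continuousOn isCompact_Icc
    (fun s _ => (hymeas₂.comp measurable_prodMk_left).aestronglyMeasurable) hypath₂ hysup₂
  exact stmt6_general (Set.nonempty_Icc.2 ht.2) (fun s hs => hℓ s (hsub hs)) (hℓ₀.mono hsub)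
    (hy₁.mono hsub) (hy₂.mono hsub)
end
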